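/- arXiv:1304.2904 — 2 statements merged into one kernel-verified Lean document; each statement's English description precedes it below -/
import Mathlib

section
/- Let λ ∈ (−1/2, ∞)^n and fix γ ∈ (0, 1/2] with γ ≤ min_{1≤k≤n}(λ_k + 1/2). Then there is C > 0 such that for all x, x' ∈ (0,∞)^n and t > 0: ∫_{|z|<√t} χ_{{x+z ∈ (0,∞)^n, x'+z ∉ (0,∞)^n}} Ξ_λ(x,z,t) dz ≤ C·(|x−x'|²/t)^γ, where Ξ_λ(x,z,t) = Π_{j=1}^n (x_j+z_j)^{2λ_j}/V_{√t}^{λ_j,+}(x_j) and V_s^{λ_j,+}(x_j) is the w_{λ_j}^+-measure of (x_j−s, x_j+s) ∩ (0,∞). -/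
open MeasureTheory
open scoped BigOperators

/-- `V_s^{λ,+}(x)`, the `w_λ^+` measure of `(x-s,x+s) ∩ (0,∞)`. -/
noncomputable def Vplus (l x s : ℝ) : ℝ :=
  ∫ u in Set.Ioo (x - s) (x + s) ∩ Set.Ioi (0 : ℝ), u ^ (2 * l)

/-- `Ξ_λ(x,z,t) = ∏_j (x_j+z_j)^{2λ_j} / V_{√t}^{λ_j,+}(x_j)`. -/
noncomputable def Xi {n : ℕ} (l : Fin n → ℝ) (x z : EuclideanSpace ℝ (Fin n)) (t : ℝ) : ℝ :=
  ∏ j, (x j + z j) ^ (2 * l j) / Vplus (l j) (x j) (Real.sqrt t)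

/-- The normalized weight `u^{2λ} / V_s^{λ,+}(x)` on `(x-s,x+s) ∩ (0,∞) ∩ B`, extended by zero. -/
noncomputable def normalizedWeight (l x s : ℝ) (B : Set ℝ) (u : ℝ) : ℝ :=
  Set.indicator (Set.Ioo (x - s) (x + s) ∩ Set.Ioi 0 ∩ B) (fun u => u ^ (2 * l)) u / Vplus l x s

lemma Vplus_nonneg (l x s : ℝ) : 0 ≤ Vplus l x s :=
  setIntegral_nonneg (measurableSet_Ioo.inter measurableSet_Ioi)
    fun _ hu => Real.rpow_nonneg (le_of_lt hu.2) _

lemma integrableOn_rpow_Ioo_inter_Ioi {l x s : ℝ} (hl : -1 / 2 < l) (hx : 0 < x) (hs : 0 < s) :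
    IntegrableOn (fun u : ℝ => u ^ (2 * l)) (Set.Ioo (x - s) (x + s) ∩ Set.Ioi 0) := by
  have h : IntervalIntegrable (fun u : ℝ => u ^ (2 * l)) volume 0 (x + s) :=
    intervalIntegral.intervalIntegrable_rpow' (by linarith)
  rw [intervalIntegrable_iff_integrableOn_Ioc_of_le (by linarith)] at h
  exact h.mono_set fun u hu => ⟨hu.2, hu.1.2.le⟩

lemma normalizedWeight_nonneg (l x s : ℝ) (B : Set ℝ) (u : ℝ) :
    0 ≤ normalizedWeight l x s B u :=
  div_nonneg (Set.indicator_nonneg (fun _ hu => Real.rpow_nonneg (le_of_lt hu.1.2) _) _)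
    (Vplus_nonneg l x s)

lemma normalizedWeight_integrable {l x s : ℝ} (hl : -1 / 2 < l) (hx : 0 < x) (hs : 0 < s)
    {B : Set ℝ} (hB : MeasurableSet B) : Integrable (normalizedWeight l x s B) := by
  refine Integrable.div_const ?_ _
  rw [integrable_indicator_iff ((measurableSet_Ioo.inter measurableSet_Ioi).inter hB)]
  exact (integrableOn_rpow_Ioo_inter_Ioi hl hx hs).mono_set Set.inter_subset_left

lemma integral_normalizedWeight (l x s : ℝ) {B : Set ℝ} (hB : MeasurableSet B) :
    ∫ u, normalizedWeight l x s B u =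
      (∫ u in Set.Ioo (x - s) (x + s) ∩ Set.Ioi 0 ∩ B, u ^ (2 * l)) / Vplus l x s := by
  unfold normalizedWeight
  rw [integral_div, integral_indicator ((measurableSet_Ioo.inter measurableSet_Ioi).inter hB)]

lemma integral_normalizedWeight_le_one {l x s : ℝ} (hl : -1 / 2 < l) (hx : 0 < x) (hs : 0 < s)
    {B : Set ℝ} (hB : MeasurableSet B) : ∫ u, normalizedWeight l x s B u ≤ 1 := by
  rw [integral_normalizedWeight l x s hB]
  refine div_le_one_of_le₀ ?_ (Vplus_nonneg l x s)
  refine setIntegral_mono_set (integrableOn_rpow_Ioo_inter_Ioi hl hx hs) ?_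
    Set.inter_subset_left.eventuallyLE
  filter_upwards [ae_restrict_mem (measurableSet_Ioo.inter measurableSet_Ioi)] with u hu
  exact Real.rpow_nonneg (le_of_lt hu.2) _

lemma Vplus_ge {l x s : ℝ} (hl : -1 / 2 < l) (hx : 0 < x) (hs : 0 < s) (hxs : x ≤ 2 * s) :
    (s / 2) ^ (2 * l + 1) / 6 ≤ Vplus l x s := by
  have hsub : Set.Ioo (x + s / 2) (x + s) ⊆ Set.Ioo (x - s) (x + s) ∩ Set.Ioi 0 :=
    fun u hu => ⟨⟨by linarith [hu.1], hu.2⟩, show 0 < u by linarith [hu.1]⟩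
  have hint := integrableOn_rpow_Ioo_inter_Ioi hl hx hs
  have hmono : ∫ u in Set.Ioo (x + s / 2) (x + s), u ^ (2 * l) ≤ Vplus l x s := by
    refine setIntegral_mono_set hint ?_ hsub.eventuallyLE
    filter_upwards [ae_restrict_mem (measurableSet_Ioo.inter measurableSet_Ioi)] with u hu
    exact Real.rpow_nonneg (le_of_lt hu.2) _
  have hconst : ∫ _ in Set.Ioo (x + s / 2) (x + s), (s / 2) ^ (2 * l + 1) / (3 * s) ≤
      ∫ u in Set.Ioo (x + s / 2) (x + s), u ^ (2 * l) := by
    refine setIntegral_mono_on (integrableOn_const (by simp)) (hint.mono_set hsub)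
      measurableSet_Ioo fun u hu => ?_
    have hu0 : 0 < u := by linarith [hu.1]
    rw [show 2 * l = (2 * l + 1) - 1 by ring, Real.rpow_sub_one hu0.ne', sub_add_cancel]
    have hpow : (s / 2) ^ (2 * l + 1) ≤ u ^ (2 * l + 1) :=
      Real.rpow_le_rpow (by positivity) (by linarith [hu.1]) (by linarith)
    exact div_le_div₀ (by positivity) hpow hu0 (by linarith [hu.2])
  refine le_trans (le_of_eq ?_) (hconst.trans hmono)
  rw [setIntegral_const, measureReal_def, Real.volume_Ioo,
    ENNReal.toReal_ofReal (by linarith), smul_eq_mul]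
  field_simp
  ring

lemma setIntegral_rpow_Iic_le {l x s d : ℝ} (hl : -1 / 2 < l) (hd : 0 ≤ d) :
    ∫ u in Set.Ioo (x - s) (x + s) ∩ Set.Ioi 0 ∩ Set.Iic d, u ^ (2 * l) ≤
      d ^ (2 * l + 1) / (2 * l + 1) := by
  have hint : IntegrableOn (fun u : ℝ => u ^ (2 * l)) (Set.Ioc 0 d) := by
    rw [← intervalIntegrable_iff_integrableOn_Ioc_of_le hd]
    exact intervalIntegral.intervalIntegrable_rpow' (by linarith)
  have hval : ∫ u in Set.Ioc 0 d, u ^ (2 * l) = d ^ (2 * l + 1) / (2 * l + 1) := by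
    rw [← intervalIntegral.integral_of_le hd, integral_rpow (Or.inl (by linarith)),
      Real.zero_rpow (by linarith), sub_zero]
  rw [← hval]
  refine setIntegral_mono_set hint ?_
    (show _ ⊆ Set.Ioc 0 d from fun u hu => ⟨hu.1.2, hu.2⟩).eventuallyLE
  filter_upwards [ae_restrict_mem measurableSet_Ioc] with u hu
  exact Real.rpow_nonneg hu.1.le _

lemma integral_normalizedWeight_Iic_le {l x s d γ : ℝ} (hl : -1 / 2 < l) (hx : 0 < x)
    (hs : 0 < s) (hd : 0 ≤ d) (hγ0 : 0 < γ) (hγl : γ ≤ l + 1 / 2) :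
    ∫ u, normalizedWeight l x s (Set.Iic d) u ≤
      (1 + 6 * 2 ^ (2 * l + 1) / (2 * l + 1)) * (d / s) ^ (2 * γ) := by
  have hl' : 0 < 2 * l + 1 := by linarith
  have hK : 0 ≤ 6 * (2 : ℝ) ^ (2 * l + 1) / (2 * l + 1) := by positivity
  have hr : 0 ≤ (d / s) ^ (2 * γ) := by positivity
  rcases le_or_gt s d with hsd | hds
  · refine (integral_normalizedWeight_le_one hl hx hs measurableSet_Iic).trans ?_
    have : 1 ≤ (d / s) ^ (2 * γ) :=
      Real.one_le_rpow ((one_le_div hs).2 hsd) (by linarith)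
    nlinarith
  rw [integral_normalizedWeight l x s measurableSet_Iic]
  rcases le_or_gt (2 * s) x with hxs | hxs
  · have hempty : Set.Ioo (x - s) (x + s) ∩ Set.Ioi 0 ∩ Set.Iic d = ∅ := by
      ext u
      simp only [Set.mem_inter_iff, Set.mem_Ioo, Set.mem_Ioi, Set.mem_Iic,
        Set.mem_empty_iff_false, iff_false]
      rintro ⟨⟨⟨h1, _⟩, _⟩, h2⟩
      linarith
    rw [hempty, setIntegral_empty, zero_div]
    positivity
  calc _ ≤ (d ^ (2 * l + 1) / (2 * l + 1)) / ((s / 2) ^ (2 * l + 1) / 6) :=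
        div_le_div₀ (by positivity) (setIntegral_rpow_Iic_le hl hd) (by positivity)
          (Vplus_ge hl hx hs hxs.le)
    _ = 6 * 2 ^ (2 * l + 1) / (2 * l + 1) * (d / s) ^ (2 * l + 1) := by
        rw [Real.div_rpow hs.le (by norm_num), Real.div_rpow hd hs.le]
        have := Real.rpow_pos_of_pos hs (2 * l + 1)
        field_simp
    _ ≤ 6 * 2 ^ (2 * l + 1) / (2 * l + 1) * (d / s) ^ (2 * γ) :=
        mul_le_mul_of_nonneg_left (Real.rpow_le_rpow_of_exponent_ge' (by positivity)
          ((div_le_one hs).2 hds.le) (by linarith) (by linarith)) hK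
    _ ≤ _ := by nlinarith

lemma Xi_eq_prod_normalizedWeight {n : ℕ} (l : Fin n → ℝ) (x z : EuclideanSpace ℝ (Fin n))
    (t : ℝ) (B : Fin n → Set ℝ) (hz : ‖z‖ < Real.sqrt t) (hpos : ∀ j, 0 < x j + z j)
    (hB : ∀ j, x j + z j ∈ B j) :
    Xi l x z t = ∏ j, normalizedWeight (l j) (x j) (Real.sqrt t) (B j) (x j + z j) := by
  refine Finset.prod_congr rfl fun j _ => ?_
  have hj : |z j| < Real.sqrt t := (PiLp.norm_apply_le z j).trans_lt hz
  rw [abs_lt] at hj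
  rw [normalizedWeight, Set.indicator_of_mem]
  exact ⟨⟨⟨by linarith, by linarith⟩, hpos j⟩, hB j⟩

/-- The half-line `(-∞,d]` in the `k`-th coordinate and the whole line in the others. -/
def coordSlab {n : ℕ} (k : Fin n) (d : ℝ) (j : Fin n) : Set ℝ :=
  {u | j = k → u ≤ d}

lemma coordSlab_self {n : ℕ} (k : Fin n) (d : ℝ) : coordSlab k d k = Set.Iic d := by
  ext u; simp [coordSlab]

lemma measurableSet_coordSlab {n : ℕ} (k : Fin n) (d : ℝ) (j : Fin n) :
    MeasurableSet (coordSlab k d j) := by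
  by_cases h : j = k
  · rw [h, coordSlab_self]; exact measurableSet_Iic
  · simp [coordSlab, h]

lemma indicator_Xi_le_sum {n : ℕ} (l : Fin n → ℝ) (x x' z : EuclideanSpace ℝ (Fin n)) (t : ℝ)
    (hz : ‖z‖ < Real.sqrt t) :
    Set.indicator {z : EuclideanSpace ℝ (Fin n) |
        (∀ j, 0 < x j + z j) ∧ ¬ (∀ j, 0 < x' j + z j)} (fun z => Xi l x z t) z ≤
      ∑ k, ∏ j, normalizedWeight (l j) (x j) (Real.sqrt t) (coordSlab k ‖x - x'‖ j)
        (x j + z j) := by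
  have hnn : ∀ k, 0 ≤ ∏ j, normalizedWeight (l j) (x j) (Real.sqrt t)
      (coordSlab k ‖x - x'‖ j) (x j + z j) :=
    fun k => Finset.prod_nonneg fun j _ => normalizedWeight_nonneg _ _ _ _ _
  refine Set.indicator_apply_le' (fun hmem => ?_) fun _ => Finset.sum_nonneg fun k _ => hnn k
  obtain ⟨hpos, hneg⟩ := hmem
  push Not at hneg
  obtain ⟨k, hk⟩ := hneg
  have hd : x k - x' k ≤ ‖x - x'‖ := (le_abs_self _).trans (PiLp.norm_apply_le (x - x') k)
  rw [Xi_eq_prod_normalizedWeight l x z t (coordSlab k ‖x - x'‖) hz hpos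
    fun j hj => by subst hj; linarith]
  exact Finset.single_le_sum (fun k _ => hnn k) (Finset.mem_univ k)

lemma indicator_Xi_nonneg {n : ℕ} (l : Fin n → ℝ) (x x' z : EuclideanSpace ℝ (Fin n)) (t : ℝ) :
    0 ≤ Set.indicator {z : EuclideanSpace ℝ (Fin n) |
        (∀ j, 0 < x j + z j) ∧ ¬ (∀ j, 0 < x' j + z j)} (fun z => Xi l x z t) z :=
  Set.indicator_apply_nonneg fun hmem => Finset.prod_nonneg fun j _ =>
    div_nonneg (Real.rpow_nonneg (hmem.1 j).le _) (Vplus_nonneg _ _ _)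

lemma integrable_prod_euclideanSpace {n : ℕ} {f : Fin n → ℝ → ℝ} (hf : ∀ j, Integrable (f j)) :
    Integrable fun z : EuclideanSpace ℝ (Fin n) => ∏ j, f j (z j) :=
  ((PiLp.volume_preserving_ofLp (Fin n)).integrable_comp_emb
    (MeasurableEquiv.toLp 2 (Fin n → ℝ)).symm.measurableEmbedding).2
    (Integrable.fintype_prod hf)

lemma integral_prod_euclideanSpace {n : ℕ} (f : Fin n → ℝ → ℝ) :
    ∫ z : EuclideanSpace ℝ (Fin n), ∏ j, f j (z j) = ∏ j, ∫ u, f j u := by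
  rw [← integral_fintype_prod_volume_eq_prod]
  exact (PiLp.volume_preserving_ofLp (Fin n)).integral_comp
    (MeasurableEquiv.toLp 2 (Fin n → ℝ)).symm.measurableEmbedding
    (fun z : Fin n → ℝ => ∏ j, f j (z j))

theorem stmt15 {n : ℕ} (l : Fin n → ℝ) (hl : ∀ j, -1/2 < l j)
    (γ : ℝ) (hγ0 : 0 < γ) (hγ1 : γ ≤ 1/2) (hγl : ∀ k, γ ≤ l k + 1/2) :
    ∃ C : ℝ, 0 < C ∧
      ∀ (x x' : EuclideanSpace ℝ (Fin n)) (t : ℝ),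
        (∀ j, 0 < x j) → (∀ j, 0 < x' j) → 0 < t →
        (∫ z in Metric.ball (0 : EuclideanSpace ℝ (Fin n)) (Real.sqrt t),
            Set.indicator {z : EuclideanSpace ℝ (Fin n) |
                (∀ j, 0 < x j + z j) ∧ ¬ (∀ j, 0 < x' j + z j)}
              (fun z => Xi l x z t) z) ≤
          C * (‖x - x'‖ ^ 2 / t) ^ γ := by
  refine ⟨1 + ∑ k, (1 + 6 * 2 ^ (2 * l k + 1) / (2 * l k + 1)), ?_, ?_⟩
  · have : 0 ≤ ∑ k, (1 + 6 * (2 : ℝ) ^ (2 * l k + 1) / (2 * l k + 1)) :=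
      Finset.sum_nonneg fun k _ => by
        have : 0 < 2 * l k + 1 := by linarith [hl k]
        positivity
    linarith
  intro x x' t hx _ ht
  have hs : 0 < Real.sqrt t := Real.sqrt_pos.2 ht
  set d := ‖x - x'‖ with hd
  have hd0 : 0 ≤ d := norm_nonneg _
  have hpow : (d ^ 2 / t) ^ γ = (d / Real.sqrt t) ^ (2 * γ) := by
    rw [Real.rpow_mul (by positivity), Real.rpow_two, div_pow, Real.sq_sqrt ht.le]
  rw [hpow]
  have hint : ∀ k j, Integrable fun u =>
      normalizedWeight (l j) (x j) (Real.sqrt t) (coordSlab k d j) (x j + u) := fun k j =>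
    (normalizedWeight_integrable (hl j) (hx j) hs (measurableSet_coordSlab k d j)).comp_add_left _
  have hsumint : Integrable fun z : EuclideanSpace ℝ (Fin n) => ∑ k, ∏ j,
      normalizedWeight (l j) (x j) (Real.sqrt t) (coordSlab k d j) (x j + z j) :=
    integrable_finsetSum _ fun k _ => integrable_prod_euclideanSpace (hint k)
  have hslab : ∀ k, ∏ j, ∫ u,
      normalizedWeight (l j) (x j) (Real.sqrt t) (coordSlab k d j) (x j + u) ≤
        (1 + 6 * 2 ^ (2 * l k + 1) / (2 * l k + 1)) * (d / Real.sqrt t) ^ (2 * γ) := by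
    intro k
    simp_rw [integral_add_left_eq_self]
    rw [← Finset.mul_prod_erase _ _ (Finset.mem_univ k), coordSlab_self]
    refine (mul_le_of_le_one_right
      (integral_nonneg fun u => normalizedWeight_nonneg _ _ _ _ _) ?_).trans
      (integral_normalizedWeight_Iic_le (hl k) (hx k) hs hd0 hγ0 (hγl k))
    exact Finset.prod_le_one
      (fun j _ => integral_nonneg fun u => normalizedWeight_nonneg _ _ _ _ _)
      fun j _ => integral_normalizedWeight_le_one (hl j) (hx j) hs (measurableSet_coordSlab k d j)
  calc _ ≤ ∫ z in Metric.ball (0 : EuclideanSpace ℝ (Fin n)) (Real.sqrt t), ∑ k, ∏ j,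
        normalizedWeight (l j) (x j) (Real.sqrt t) (coordSlab k d j) (x j + z j) := by
        refine integral_mono_of_nonneg
          (Filter.Eventually.of_forall fun z => indicator_Xi_nonneg l x x' z t)
          hsumint.integrableOn ?_
        filter_upwards [ae_restrict_mem Metric.isOpen_ball.measurableSet] with z hz
        exact indicator_Xi_le_sum l x x' z t (mem_ball_zero_iff.1 hz)
    _ ≤ ∫ z : EuclideanSpace ℝ (Fin n), ∑ k, ∏ j,
        normalizedWeight (l j) (x j) (Real.sqrt t) (coordSlab k d j) (x j + z j) :=
        setIntegral_le_integral hsumint (Filter.Eventually.of_forall fun z =>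
          Finset.sum_nonneg fun k _ => Finset.prod_nonneg fun j _ =>
            normalizedWeight_nonneg _ _ _ _ _)
    _ = ∑ k, ∏ j, ∫ u,
        normalizedWeight (l j) (x j) (Real.sqrt t) (coordSlab k d j) (x j + u) := by
        rw [integral_finsetSum _ fun k _ => integrable_prod_euclideanSpace (hint k)]
        exact Finset.sum_congr rfl fun k _ => integral_prod_euclideanSpace fun j u =>
          normalizedWeight (l j) (x j) (Real.sqrt t) (coordSlab k d j) (x j + u)
    _ ≤ (∑ k, (1 + 6 * 2 ^ (2 * l k + 1) / (2 * l k + 1))) *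
        (d / Real.sqrt t) ^ (2 * γ) := by
        rw [Finset.sum_mul]
        exact Finset.sum_le_sum fun k _ => hslab k
    _ ≤ _ := mul_le_mul_of_nonneg_right (by linarith) (by positivity)
end

section
/- Let λ ∈ (−1/2, ∞)^n. Then there exists γ = γ(λ) ∈ (0, 1/2] with γ < min_{1≤k≤n}(λ_k + 1/2), and a constant C > 0, such that for all x, x' ∈ (0,∞)^n and t > 0: ∫_{|z|<√t} χ_{{x+z, x'+z ∈ (0,∞)^n}} |√(Ξ_λ(x,z,t)) − √(Ξ_λ(x',z,t))|² dz ≤ C·(|x−x'|²/t)^γ, where Ξ_λ(x,z,t) = Π_{j=1}^n (x_j+z_j)^{2λ_j}/V_{√t}^{λ_j,+}(x_j). -/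
open MeasureTheory
open scoped BigOperators

theorem Vplus_eq {l x s : ℝ} (hx : 0 < x) (hs : 0 < s) :
    Vplus l x s = ∫ u in (max (x - s) 0)..(x + s), u ^ (2 * l) := by
  have h : Set.Ioo (x - s) (x + s) ∩ Set.Ioi (0 : ℝ) = Set.Ioo (max (x - s) 0) (x + s) := by
    ext u
    simp only [Set.mem_inter_iff, Set.mem_Ioo, Set.mem_Ioi, max_lt_iff]
    tauto
  rw [Vplus, h, intervalIntegral.integral_of_le (max_le (by linarith) (by linarith)),
    integral_Ioc_eq_integral_Ioo]

theorem integral_rpow_le_of_mem {p : ℝ} (hp : -1 < p) :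
    ∃ K : ℝ, 0 < K ∧ ∀ m s v d : ℝ, 0 ≤ m → 0 < s → m ≤ v → v ≤ m + 2 * s → 0 ≤ d → d ≤ s →
      ∫ u in v..(v + d), u ^ p ≤ K * ((m + s) ^ p * s * (d / s) ^ (min p 0 + 1)) := by
  have hr : 0 < min p 0 + 1 := by
    have : -1 < min p 0 := lt_min hp (by norm_num)
    linarith
  refine ⟨((3 : ℝ) ^ p + (1 / 2 : ℝ) ^ p) / (min p 0 + 1), by positivity, ?_⟩
  intro m s v d hm hs hmv hv hd hds
  have hM : 0 < m + s := by linarith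
  have hr' : -1 < min p 0 := by linarith
  have hshift : ∫ u in v..(v + d), u ^ p = ∫ y in (0 : ℝ)..(s⁻¹ * d), s * (v + s * y) ^ p := by
    rw [intervalIntegral.integral_const_mul,
      intervalIntegral.mul_integral_comp_add_mul (f := fun u : ℝ => u ^ p) (c := s) (d := v)]
    congr 1
    · simp
    · field_simp
  have hsd : 0 ≤ s⁻¹ * d := by positivity
  have hsd1 : s⁻¹ * d ≤ 1 := by
    rw [inv_mul_le_iff₀ hs]; linarith
  have hpt : ∀ y ∈ Set.Ioo 0 (s⁻¹ * d), s * (v + s * y) ^ p ≤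
      (((3 : ℝ) ^ p + (1 / 2 : ℝ) ^ p) * ((m + s) ^ p * s)) * y ^ (min p 0) := by
    rintro y ⟨hy0, hy1⟩
    have hy : y ≤ 1 := by linarith
    have key : (v + s * y) ^ p ≤ ((3 : ℝ) ^ p + (1 / 2 : ℝ) ^ p) * (m + s) ^ p * y ^ (min p 0) := by
      rcases le_total 0 p with h0 | h0
      · rw [min_eq_right h0, Real.rpow_zero, mul_one]
        calc (v + s * y) ^ p ≤ (3 * (m + s)) ^ p := by
              apply Real.rpow_le_rpow (by nlinarith) (by nlinarith) h0
          _ = 3 ^ p * (m + s) ^ p := Real.mul_rpow (by norm_num) hM.le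
          _ ≤ _ := by
              gcongr
              have : (0 : ℝ) < (1 / 2 : ℝ) ^ p := by positivity
              linarith
      · rw [min_eq_left h0]
        calc (v + s * y) ^ p ≤ (1 / 2 * (m + s) * y) ^ p := by
              apply Real.rpow_le_rpow_of_nonpos (by positivity) _ h0
              nlinarith [mul_nonneg hm (sub_nonneg.2 hy), mul_pos hs hy0]
          _ = (1 / 2) ^ p * (m + s) ^ p * y ^ p := by
              rw [Real.mul_rpow (by positivity) hy0.le, Real.mul_rpow (by norm_num) hM.le]
          _ ≤ _ := by
              gcongr
              have : (0 : ℝ) < (3 : ℝ) ^ p := by positivity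
              linarith
    calc s * (v + s * y) ^ p
        ≤ s * (((3 : ℝ) ^ p + (1 / 2 : ℝ) ^ p) * (m + s) ^ p * y ^ (min p 0)) := by gcongr
      _ = _ := by ring
  rw [hshift]
  have hint : IntervalIntegrable (fun u : ℝ => u ^ p) volume v (v + d) :=
    intervalIntegral.intervalIntegrable_rpow' hp
  calc ∫ y in (0 : ℝ)..(s⁻¹ * d), s * (v + s * y) ^ p
      ≤ ∫ y in (0 : ℝ)..(s⁻¹ * d),
          (((3 : ℝ) ^ p + (1 / 2 : ℝ) ^ p) * ((m + s) ^ p * s)) * y ^ (min p 0) := by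
        refine intervalIntegral.integral_mono_on_of_le_Ioo hsd ?_ ?_ hpt
        · apply IntervalIntegrable.const_mul
          have := (hint.comp_add_left v).comp_mul_left (c := s)
          convert this using 1
          · simp
          · field_simp; ring
        · exact (intervalIntegral.intervalIntegrable_rpow' hr').const_mul _
    _ = _ := by
        rw [intervalIntegral.integral_const_mul, integral_rpow (Or.inl hr'),
          Real.zero_rpow hr.ne', inv_mul_eq_div]
        field_simp
        ring

theorem le_integral_rpow {p : ℝ} (hp : -1 < p) :
    ∃ k : ℝ, 0 < k ∧ ∀ m s e : ℝ, 0 ≤ m → 0 < s → m + s ≤ e →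
      k * ((m + s) ^ p * s) ≤ ∫ u in m..e, u ^ p := by
  refine ⟨1 / 2 * min 1 ((1 / 2 : ℝ) ^ p), by positivity, ?_⟩
  intro m s e hm hs he
  have hM : 0 < m + s := by linarith
  have hi : ∀ a b : ℝ, IntervalIntegrable (fun u : ℝ => u ^ p) volume a b :=
    fun a b => intervalIntegral.intervalIntegrable_rpow' hp
  have hlow : ∀ u ∈ Set.Icc (m + s / 2) (m + s), min 1 ((1 / 2 : ℝ) ^ p) * (m + s) ^ p ≤ u ^ p := by
    rintro u ⟨h1, h2⟩
    have hu : 0 < u := by linarith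
    rcases le_total 0 p with h0 | h0
    · calc min 1 ((1 / 2 : ℝ) ^ p) * (m + s) ^ p ≤ (1 / 2 : ℝ) ^ p * (m + s) ^ p := by
            gcongr; exact min_le_right _ _
        _ = (1 / 2 * (m + s)) ^ p := (Real.mul_rpow (by norm_num) hM.le).symm
        _ ≤ u ^ p := Real.rpow_le_rpow (by positivity) (by linarith) h0
    · calc min 1 ((1 / 2 : ℝ) ^ p) * (m + s) ^ p ≤ 1 * (m + s) ^ p := by
            gcongr; exact min_le_left _ _
        _ = (m + s) ^ p := one_mul _
        _ ≤ u ^ p := Real.rpow_le_rpow_of_nonpos hu h2 h0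
  calc 1 / 2 * min 1 ((1 / 2 : ℝ) ^ p) * ((m + s) ^ p * s)
      = ∫ _ in (m + s / 2)..(m + s), min 1 ((1 / 2 : ℝ) ^ p) * (m + s) ^ p := by
        rw [intervalIntegral.integral_const, smul_eq_mul]; ring
    _ ≤ ∫ u in (m + s / 2)..(m + s), u ^ p :=
        intervalIntegral.integral_mono_on (by linarith) (by simp) (hi _ _) hlow
    _ ≤ ∫ u in m..e, u ^ p := by
        refine intervalIntegral.integral_mono_interval (by linarith) (by linarith) he ?_ (hi _ _)
        filter_upwards [ae_restrict_mem measurableSet_Ioc] with u hu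
        exact Real.rpow_nonneg (hm.trans hu.1.le) _

theorem Vplus_pos {l x s : ℝ} (hl : -1 / 2 < l) (hx : 0 < x) (hs : 0 < s) : 0 < Vplus l x s := by
  obtain ⟨k, hk, h⟩ := le_integral_rpow (p := 2 * l) (by linarith)
  rw [Vplus_eq hx hs]
  have hm : 0 ≤ max (x - s) 0 := le_max_right _ _
  refine lt_of_lt_of_le ?_ (h (max (x - s) 0) (min s x) (x + s) hm (lt_min hs hx) ?_)
  · have : 0 < min s x := lt_min hs hx
    positivity
  · rcases le_total s x with h | h
    · rw [min_eq_left h, max_eq_left (by linarith)]; linarith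
    · rw [min_eq_right h, max_eq_right (by linarith)]; linarith

theorem intervalIntegrable_add_rpow {p : ℝ} (hp : -1 < p) (c x y : ℝ) :
    IntervalIntegrable (fun u : ℝ => (c + u) ^ p) volume x y := by
  have := (intervalIntegral.intervalIntegrable_rpow' (a := c + x) (b := c + y) hp).comp_add_left c
    enorm_ne_top
  simpa using this

theorem integral_add_rpow_le_Vplus {l a s y : ℝ} (hl : -1 / 2 < l) (ha : 0 < a) (hs : 0 < s)
    (h1 : -s ≤ y) (h2 : -a ≤ y) (h3 : y ≤ s) :
    ∫ u in y..s, (a + u) ^ (2 * l) ≤ Vplus l a s := by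
  rw [Vplus_eq ha hs, intervalIntegral.integral_comp_add_left (fun u : ℝ => u ^ (2 * l)) a]
  have hm : 0 ≤ max (a - s) 0 := le_max_right _ _
  refine intervalIntegral.integral_mono_interval (max_le (by linarith) (by linarith))
    (by linarith) le_rfl ?_ (intervalIntegral.intervalIntegrable_rpow' (by linarith))
  filter_upwards [ae_restrict_mem measurableSet_Ioc] with u hu
  exact Real.rpow_nonneg (hm.trans hu.1.le) _

theorem integral_abs_sub_rpow {p m e d : ℝ} (hp : -1 < p) (hm : 0 ≤ m) (he : m ≤ e) (hd : 0 ≤ d) :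
    ∫ v in m..e, |v ^ p - (d + v) ^ p| =
      |(∫ v in m..e, v ^ p) - ∫ v in m..e, (d + v) ^ p| := by
  have i1 : IntervalIntegrable (fun v : ℝ => v ^ p) volume m e :=
    intervalIntegral.intervalIntegrable_rpow' hp
  have i2 := intervalIntegrable_add_rpow hp d m e
  rw [← intervalIntegral.integral_sub i1 i2]
  rcases le_total 0 p with h0 | h0
  · have h : ∀ v ∈ Set.Ioo m e, v ^ p - (d + v) ^ p ≤ 0 := fun v hv =>
      sub_nonpos.2 (Real.rpow_le_rpow (hm.trans hv.1.le) (by linarith) h0)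
    rw [abs_of_nonpos, ← intervalIntegral.integral_neg, intervalIntegral.integral_of_le he,
      intervalIntegral.integral_of_le he, integral_Ioc_eq_integral_Ioo,
      integral_Ioc_eq_integral_Ioo]
    · exact setIntegral_congr_fun measurableSet_Ioo fun v hv => abs_of_nonpos (h v hv)
    · rw [intervalIntegral.integral_of_le he, integral_Ioc_eq_integral_Ioo]
      exact setIntegral_nonpos measurableSet_Ioo h
  · have h : ∀ v ∈ Set.Ioo m e, 0 ≤ v ^ p - (d + v) ^ p := fun v hv =>
      sub_nonneg.2 (Real.rpow_le_rpow_of_nonpos (hm.trans_lt hv.1) (by linarith) h0)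
    rw [abs_of_nonneg, intervalIntegral.integral_of_le he,
      intervalIntegral.integral_of_le he, integral_Ioc_eq_integral_Ioo,
      integral_Ioc_eq_integral_Ioo]
    · exact setIntegral_congr_fun measurableSet_Ioo fun v hv => abs_of_nonneg (h v hv)
    · rw [intervalIntegral.integral_of_le he, integral_Ioc_eq_integral_Ioo]
      exact setIntegral_nonneg measurableSet_Ioo h

/-- Integrating the difference of the two normalized densities over the common window costs at
most the mass of the two end intervals of length `b - a`, relative to `Vplus l a s`. -/
theorem integral_abs_sub_density_le {l a b s : ℝ} (hl : -1 / 2 < l) (ha : 0 < a) (hab : a ≤ b)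
    (hs : 0 < s) :
    ∫ u in (max (a - s) 0 - a)..s,
        |(a + u) ^ (2 * l) / Vplus l a s - (b + u) ^ (2 * l) / Vplus l b s| ≤
      (3 * (∫ v in (max (a - s) 0)..(max (a - s) 0 + (b - a)), v ^ (2 * l)) +
        2 * ∫ v in (a + s)..(a + s + (b - a)), v ^ (2 * l)) / Vplus l a s := by
  have hp : -1 < 2 * l := by linarith
  have hb : 0 < b := ha.trans_le hab
  have hVa := Vplus_pos hl ha hs
  have hVb := Vplus_pos hl hb hs
  have eVa := Vplus_eq (l := l) ha hs
  have eVb := Vplus_eq (l := l) hb hs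
  set p := 2 * l
  set m := max (a - s) 0 with hmdef
  have hm : 0 ≤ m := le_max_right _ _
  have hma : m ≤ a + s := max_le (by linarith) (by linarith)
  set d := b - a with hd
  have hd0 : 0 ≤ d := sub_nonneg.2 hab
  set VA := Vplus l a s
  set VB := Vplus l b s
  have hi : ∀ x y : ℝ, IntervalIntegrable (fun u : ℝ => u ^ p) volume x y :=
    fun x y => intervalIntegral.intervalIntegrable_rpow' hp
  have nn : ∀ x y : ℝ, 0 ≤ x → x ≤ y → 0 ≤ ∫ u in x..y, u ^ p := fun x y hx hxy =>
    intervalIntegral.integral_nonneg hxy fun u hu => Real.rpow_nonneg (hx.trans hu.1) _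
  set X := ∫ v in m..(m + d), v ^ p with hX
  set Y := ∫ v in (a + s)..(a + s + d), v ^ p with hY
  have hX0 : 0 ≤ X := nn _ _ hm (by linarith)
  have hY0 : 0 ≤ Y := nn _ _ (by linarith) (by linarith)
  set N := ∫ v in m..(a + s), (d + v) ^ p with hN
  have eN : N = ∫ v in (m + d)..(a + s + d), v ^ p := by
    rw [hN, intervalIntegral.integral_comp_add_left (fun u : ℝ => u ^ p) d, add_comm d, add_comm d]
  have hN0 : 0 ≤ N := by rw [eN]; exact nn _ _ (by linarith) (by linarith)
  have hVN : VA - N = X - Y := by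
    have e1 := intervalIntegral.integral_add_adjacent_intervals (hi m (m + d))
      (hi (m + d) (a + s + d))
    have e2 := intervalIntegral.integral_add_adjacent_intervals (hi m (a + s))
      (hi (a + s) (a + s + d))
    rw [eVa, eN, hX, hY]
    linarith
  have hm' : m ≤ max (b - s) 0 := max_le_max (by linarith) le_rfl
  have hm'' : max (b - s) 0 ≤ m + d := by
    refine max_le ?_ (by linarith)
    have : a - s ≤ m := le_max_left _ _
    linarith
  have hVB1 : N ≤ VB ∧ VB ≤ N + X := by
    have e1 := intervalIntegral.integral_add_adjacent_intervals (hi (max (b - s) 0) (m + d))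
      (hi (m + d) (a + s + d))
    have e2 := intervalIntegral.integral_add_adjacent_intervals (hi m (max (b - s) 0))
      (hi (max (b - s) 0) (m + d))
    have n1 := nn _ _ hm hm'
    have n2 := nn _ _ (hm.trans hm') hm''
    have hbs : b + s = a + s + d := by rw [hd]; ring
    rw [eVb, eN, hX, hbs]
    constructor <;> linarith
  have hshift : (∫ u in (m - a)..s, |(a + u) ^ p / VA - (b + u) ^ p / VB|) =
      ∫ v in m..(a + s), |v ^ p / VA - (d + v) ^ p / VB| := by
    have := intervalIntegral.integral_comp_add_left
      (fun v : ℝ => |v ^ p / VA - (d + v) ^ p / VB|) a (a := m - a) (b := s)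
    rw [add_sub_cancel] at this
    rw [← this]
    refine intervalIntegral.integral_congr fun u _ => ?_
    simp only [hd]
    congr 4
    ring
  have j1 : IntervalIntegrable (fun v : ℝ => |v ^ p - (d + v) ^ p| / VA) volume m (a + s) :=
    (((hi _ _).sub (intervalIntegrable_add_rpow hp d _ _)).abs).div_const _
  have j2 : IntervalIntegrable (fun v : ℝ => (d + v) ^ p * |1 / VA - 1 / VB|) volume m (a + s) :=
    (intervalIntegrable_add_rpow hp d _ _).mul_const _
  have j0 : IntervalIntegrable (fun v : ℝ => |v ^ p / VA - (d + v) ^ p / VB|) volume m (a + s) :=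
    (((hi _ _).div_const _).sub ((intervalIntegrable_add_rpow hp d _ _).div_const _)).abs
  have hE : |VA - N| ≤ X + Y := by
    rw [hVN, abs_le]; constructor <;> linarith
  have hV : |VB - VA| ≤ 2 * X + Y := by
    rw [abs_le]; constructor <;> linarith [hVB1.1, hVB1.2]
  calc (∫ u in (m - a)..s, |(a + u) ^ p / VA - (b + u) ^ p / VB|)
      = ∫ v in m..(a + s), |v ^ p / VA - (d + v) ^ p / VB| := hshift
    _ ≤ ∫ v in m..(a + s), (|v ^ p - (d + v) ^ p| / VA + (d + v) ^ p * |1 / VA - 1 / VB|) := by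
        refine intervalIntegral.integral_mono_on hma j0 (j1.add j2) fun v hv => ?_
        have hnn : 0 ≤ (d + v) ^ p := Real.rpow_nonneg (add_nonneg hd0 (hm.trans hv.1)) _
        calc |v ^ p / VA - (d + v) ^ p / VB|
            = |(v ^ p - (d + v) ^ p) / VA + (d + v) ^ p * (1 / VA - 1 / VB)| := by
              congr 1; ring
          _ ≤ |(v ^ p - (d + v) ^ p) / VA| + |(d + v) ^ p * (1 / VA - 1 / VB)| := abs_add_le _ _
          _ = _ := by rw [abs_div, abs_mul, abs_of_nonneg hnn, abs_of_pos hVa]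
    _ = |VA - N| / VA + N * |1 / VA - 1 / VB| := by
        rw [intervalIntegral.integral_add j1 j2, intervalIntegral.integral_div,
          intervalIntegral.integral_mul_const, integral_abs_sub_rpow hp hm hma hd0, eVa]
    _ = |VA - N| / VA + (N / VB) * (|VB - VA| / VA) := by
        have : 1 / VA - 1 / VB = (VB - VA) / (VA * VB) := by field_simp
        rw [this, abs_div, abs_of_pos (mul_pos hVa hVb)]
        field_simp
    _ ≤ (X + Y) / VA + 1 * ((2 * X + Y) / VA) := by
        gcongr
        exact (div_le_one hVb).2 hVB1.1
    _ = (3 * X + 2 * Y) / VA := by ring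

theorem integral_abs_sub_density_le_two {l a b s y : ℝ} (hl : -1 / 2 < l) (ha : 0 < a) (hb : 0 < b)
    (hs : 0 < s) (h1 : -s ≤ y) (h2 : -a ≤ y) (h3 : -b ≤ y) (h4 : y ≤ s) :
    ∫ u in y..s, |(a + u) ^ (2 * l) / Vplus l a s - (b + u) ^ (2 * l) / Vplus l b s| ≤ 2 := by
  have hVa := Vplus_pos hl ha hs
  have hVb := Vplus_pos hl hb hs
  have ia := (intervalIntegrable_add_rpow (p := 2 * l) (by linarith) a y s).div_const (Vplus l a s)
  have ib := (intervalIntegrable_add_rpow (p := 2 * l) (by linarith) b y s).div_const (Vplus l b s)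
  calc _ ≤ ∫ u in y..s, ((a + u) ^ (2 * l) / Vplus l a s + (b + u) ^ (2 * l) / Vplus l b s) := by
        refine intervalIntegral.integral_mono_on h4 (ia.sub ib).abs (ia.add ib) fun u hu => ?_
        have n1 : 0 ≤ (a + u) ^ (2 * l) / Vplus l a s :=
          div_nonneg (Real.rpow_nonneg (by linarith [hu.1]) _) hVa.le
        have n2 : 0 ≤ (b + u) ^ (2 * l) / Vplus l b s :=
          div_nonneg (Real.rpow_nonneg (by linarith [hu.1]) _) hVb.le
        rw [abs_le]; constructor <;> linarith
    _ ≤ 1 + 1 := by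
        rw [intervalIntegral.integral_add ia ib, intervalIntegral.integral_div,
          intervalIntegral.integral_div]
        exact add_le_add
          ((div_le_one hVa).2 (integral_add_rpow_le_Vplus hl ha hs h1 h2 h4))
          ((div_le_one hVb).2 (integral_add_rpow_le_Vplus hl hb hs h1 h3 h4))
    _ = 2 := by norm_num

/-- One-dimensional Hölder estimate in the base point, for ordered base points. -/
theorem integral_abs_sub_density_le_rpow_of_le {l : ℝ} (hl : -1 / 2 < l) :
    ∃ C : ℝ, 0 < C ∧ ∀ θ : ℝ, 0 < θ → θ ≤ 1 → θ ≤ 2 * l + 1 → ∀ a b s : ℝ, 0 < a → a ≤ b → 0 < s →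
      ∫ u in (max (a - s) 0 - a)..s,
        |(a + u) ^ (2 * l) / Vplus l a s - (b + u) ^ (2 * l) / Vplus l b s| ≤
      C * (|a - b| / s) ^ θ := by
  have hp : -1 < 2 * l := by linarith
  obtain ⟨K, hK, hup⟩ := integral_rpow_le_of_mem hp
  obtain ⟨k, hk, hlow⟩ := le_integral_rpow hp
  refine ⟨max 2 (5 * K / k), lt_max_of_lt_left (by norm_num), ?_⟩
  intro θ hθ hθ1 hθl a b s ha hab hs
  rw [abs_sub_comm, abs_of_nonneg (sub_nonneg.2 hab)]
  have hma : max (a - s) 0 ≤ a := max_le (by linarith) ha.le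
  have hms : a - s ≤ max (a - s) 0 := le_max_left _ _
  have hm0 : 0 ≤ max (a - s) 0 := le_max_right _ _
  rcases le_total s (b - a) with h | h
  · calc _ ≤ (2 : ℝ) := integral_abs_sub_density_le_two hl ha (ha.trans_le hab) hs (by linarith)
          (by linarith) (by linarith) (by linarith)
      _ ≤ max 2 (5 * K / k) * 1 := by rw [mul_one]; exact le_max_left _ _
      _ ≤ _ := by
          gcongr
          exact Real.one_le_rpow ((one_le_div hs).2 h) hθ.le
  · have hd : 0 ≤ b - a := sub_nonneg.2 hab
    have hVa := Vplus_pos hl ha hs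
    set m := max (a - s) 0 with hm
    have hQ : 0 < (m + s) ^ (2 * l) * s := by positivity
    have hpow : ((b - a) / s) ^ (min (2 * l) 0 + 1) ≤ ((b - a) / s) ^ θ := by
      refine Real.rpow_le_rpow_of_exponent_ge' (by positivity) ((div_le_one hs).2 h) hθ.le ?_
      rw [← min_add_add_right]
      exact le_min hθl (by linarith)
    have b1 := hup m s m (b - a) hm0 hs le_rfl (by linarith) hd h
    have b2 := hup m s (a + s) (b - a) hm0 hs (by linarith) (by linarith) hd h
    have b3 := hlow m s (a + s) hm0 hs (by linarith)
    rw [← Vplus_eq ha hs] at b3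
    calc _ ≤ _ := integral_abs_sub_density_le hl ha hab hs
      _ ≤ (3 * (K * ((m + s) ^ (2 * l) * s * ((b - a) / s) ^ (min (2 * l) 0 + 1))) +
          2 * (K * ((m + s) ^ (2 * l) * s * ((b - a) / s) ^ (min (2 * l) 0 + 1)))) /
            (k * ((m + s) ^ (2 * l) * s)) := by gcongr
      _ = 5 * K / k * ((b - a) / s) ^ (min (2 * l) 0 + 1) := by
          field_simp
          ring
      _ ≤ max 2 (5 * K / k) * ((b - a) / s) ^ θ := by
          gcongr
          exact le_max_right _ _

/-- The increments `u` of size less than `s` for which both `a + u` and `b + u` are positive. -/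
def commonWindow (a b s : ℝ) : Set ℝ := {u | |u| < s ∧ 0 < a + u ∧ 0 < b + u}

theorem commonWindow_comm (a b s : ℝ) : commonWindow a b s = commonWindow b a s := by
  ext u
  simp only [commonWindow, Set.mem_ofPred_eq, and_comm (a := 0 < a + u)]

theorem commonWindow_eq_Ioo {a b : ℝ} (hab : a ≤ b) (s : ℝ) :
    commonWindow a b s = Set.Ioo (max (a - s) 0 - a) s := by
  ext u
  simp only [commonWindow, Set.mem_ofPred_eq, Set.mem_Ioo, abs_lt, sub_lt_iff_lt_add, max_lt_iff]
  constructor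
  · rintro ⟨⟨h1, h2⟩, h3, h4⟩
    refine ⟨⟨?_, ?_⟩, ?_⟩ <;> linarith
  · rintro ⟨⟨h1, h2⟩, h3⟩
    refine ⟨⟨?_, ?_⟩, ?_, ?_⟩ <;> linarith

theorem measurableSet_commonWindow (a b s : ℝ) : MeasurableSet (commonWindow a b s) := by
  rcases le_total a b with h | h
  · rw [commonWindow_eq_Ioo h]; exact measurableSet_Ioo
  · rw [commonWindow_comm, commonWindow_eq_Ioo h]; exact measurableSet_Ioo

theorem setIntegral_commonWindow {a b s : ℝ} (ha : 0 < a) (hab : a ≤ b) (hs : 0 < s) (f : ℝ → ℝ) :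
    ∫ u in commonWindow a b s, f u = ∫ u in (max (a - s) 0 - a)..s, f u := by
  rw [commonWindow_eq_Ioo hab, intervalIntegral.integral_of_le, integral_Ioc_eq_integral_Ioo]
  rw [sub_le_iff_le_add]
  exact max_le (by linarith) (by linarith)

/-- The factor of `Xi` in one coordinate, cut off to the common window. -/
noncomputable def windowDensity (l a b s : ℝ) : ℝ → ℝ :=
  (commonWindow a b s).indicator fun u => (a + u) ^ (2 * l) / Vplus l a s

theorem windowDensity_nonneg {l a b s : ℝ} (hl : -1 / 2 < l) (ha : 0 < a) (hs : 0 < s) (u : ℝ) :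
    0 ≤ windowDensity l a b s u :=
  Set.indicator_nonneg
    (fun _ hu => div_nonneg (Real.rpow_nonneg hu.2.1.le _) (Vplus_pos hl ha hs).le) u

theorem integrable_windowDensity {l : ℝ} (hl : -1 / 2 < l) (a b s : ℝ) :
    Integrable (windowDensity l a b s) := by
  have h := (intervalIntegrable_add_rpow (p := 2 * l) (by linarith) a (-s) s).div_const
    (Vplus l a s)
  rw [windowDensity, integrable_indicator_iff (measurableSet_commonWindow a b s)]
  refine h.1.mono_set fun u hu => ?_
  have := abs_lt.1 hu.1
  exact ⟨this.1, this.2.le⟩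

theorem integral_windowDensity_le_one {l a b s : ℝ} (hl : -1 / 2 < l) (ha : 0 < a) (hb : 0 < b)
    (hs : 0 < s) : ∫ u, windowDensity l a b s u ≤ 1 := by
  rw [windowDensity, integral_indicator (measurableSet_commonWindow a b s)]
  have key : ∀ c : ℝ, 0 < c → c ≤ a →
      ∫ u in (max (c - s) 0 - c)..s, (a + u) ^ (2 * l) / Vplus l a s ≤ 1 := by
    intro c hc hca
    have h1 : c - s ≤ max (c - s) 0 := le_max_left _ _
    have h2 : 0 ≤ max (c - s) 0 := le_max_right _ _
    have h3 : max (c - s) 0 ≤ c + s := max_le (by linarith) (by linarith)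
    rw [intervalIntegral.integral_div, div_le_one (Vplus_pos hl ha hs)]
    exact integral_add_rpow_le_Vplus hl ha hs (by linarith) (by linarith) (by linarith)
  rcases le_total a b with h | h
  · rw [setIntegral_commonWindow ha h hs]
    exact key a ha le_rfl
  · rw [commonWindow_comm, setIntegral_commonWindow hb h hs]
    exact key b hb h

/-- One-dimensional Hölder estimate in the base point. -/
theorem integral_abs_sub_windowDensity_le {l : ℝ} (hl : -1 / 2 < l) :
    ∃ C : ℝ, 0 < C ∧ ∀ θ : ℝ, 0 < θ → θ ≤ 1 → θ ≤ 2 * l + 1 → ∀ a b s : ℝ, 0 < a → 0 < b → 0 < s →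
      ∫ u, |windowDensity l a b s u - windowDensity l b a s u| ≤ C * (|a - b| / s) ^ θ := by
  obtain ⟨C, hC, h⟩ := integral_abs_sub_density_le_rpow_of_le hl
  refine ⟨C, hC, fun θ h1 h2 h3 => ?_⟩
  have key : ∀ a b s : ℝ, 0 < a → a ≤ b → 0 < s →
      ∫ u, |windowDensity l a b s u - windowDensity l b a s u| ≤ C * (|a - b| / s) ^ θ := by
    intro a b s ha hab hs
    refine le_trans (le_of_eq ?_) (h θ h1 h2 h3 a b s ha hab hs)
    rw [← setIntegral_commonWindow ha hab hs, ← integral_indicator (measurableSet_commonWindow _ _ _)]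
    congr 1
    ext u
    rw [windowDensity, windowDensity, commonWindow_comm b a]
    by_cases hu : u ∈ commonWindow a b s <;> simp [hu]
  intro a b s ha hb hs
  rcases le_total a b with hab | hab
  · exact key a b s ha hab hs
  · rw [abs_sub_comm a b]
    simpa only [abs_sub_comm] using key b a s hb hab hs

theorem abs_prod_sub_prod_le {ι : Type*} [DecidableEq ι] (S : Finset ι) (f g : ι → ℝ)
    (hf : ∀ i, 0 ≤ f i) (hg : ∀ i, 0 ≤ g i) :
    |∏ i ∈ S, f i - ∏ i ∈ S, g i| ≤
      ∑ k ∈ S, ∏ i ∈ S, if i = k then |f i - g i| else f i + g i := by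
  induction S using Finset.induction_on with
  | empty => simp
  | insert a S ha ih =>
    have hP : ∏ i ∈ S, f i ≤ ∏ i ∈ S, (f i + g i) :=
      Finset.prod_le_prod (fun i _ => hf i) fun i _ => by linarith [hg i]
    have hP0 : 0 ≤ ∏ i ∈ S, f i := Finset.prod_nonneg fun i _ => hf i
    have e1 : ∏ i ∈ S, (if i = a then |f i - g i| else f i + g i) = ∏ i ∈ S, (f i + g i) :=
      Finset.prod_congr rfl fun i hi => if_neg (ne_of_mem_of_not_mem hi ha)
    have e2 : ∀ k ∈ S, ∏ i ∈ insert a S, (if i = k then |f i - g i| else f i + g i) =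
        (f a + g a) * ∏ i ∈ S, (if i = k then |f i - g i| else f i + g i) := fun k hk => by
      rw [Finset.prod_insert ha, if_neg (ne_of_mem_of_not_mem hk ha).symm]
    rw [Finset.sum_insert ha, Finset.prod_insert ha, Finset.prod_insert ha, Finset.prod_insert ha,
      if_pos rfl, e1, Finset.sum_congr rfl e2, ← Finset.mul_sum]
    calc |f a * ∏ i ∈ S, f i - g a * ∏ i ∈ S, g i|
        = |(f a - g a) * ∏ i ∈ S, f i + g a * (∏ i ∈ S, f i - ∏ i ∈ S, g i)| := by
          congr 1; ring
      _ ≤ |f a - g a| * ∏ i ∈ S, f i + g a * |∏ i ∈ S, f i - ∏ i ∈ S, g i| := by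
          refine (abs_add_le _ _).trans_eq ?_
          rw [abs_mul, abs_mul, abs_of_nonneg hP0, abs_of_nonneg (hg a)]
      _ ≤ _ := by
          gcongr
          · exact add_nonneg (hf a) (hg a)
          · linarith [hf a]

theorem abs_sqrt_sub_sqrt_sq_le {a b : ℝ} (ha : 0 ≤ a) (hb : 0 ≤ b) :
    |√a - √b| ^ 2 ≤ |a - b| := by
  have h1 := Real.sqrt_nonneg a
  have h2 := Real.sqrt_nonneg b
  have e : a - b = (√a - √b) * (√a + √b) := by
    rw [mul_comm, ← sq_sub_sq, Real.sq_sqrt ha, Real.sq_sqrt hb]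
  rw [e, abs_mul, sq]
  refine mul_le_mul_of_nonneg_left ?_ (abs_nonneg _)
  rw [abs_of_nonneg (add_nonneg h1 h2), abs_le]
  constructor <;> linarith

theorem exists_exponent {n : ℕ} (l : Fin n → ℝ) (hl : ∀ j, -1 / 2 < l j) :
    ∃ γ : ℝ, 0 < γ ∧ γ ≤ 1 / 2 ∧ ∀ k, γ < l k + 1 / 2 := by
  have h : ∀ᶠ γ : ℝ in nhdsWithin 0 (Set.Ioi 0), 0 < γ ∧ γ ≤ 1 / 2 ∧ ∀ k, γ < l k + 1 / 2 := by
    refine eventually_mem_nhdsWithin.and (Filter.Eventually.and ?_ (Filter.eventually_all.2 ?_))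
    · exact nhdsWithin_le_nhds (eventually_le_nhds (by norm_num))
    · exact fun k => nhdsWithin_le_nhds (eventually_lt_nhds (by linarith [hl k]))
  exact h.exists

theorem integral_prod_windowDensity_le {n : ℕ} (l : Fin n → ℝ) (hl : ∀ j, -1 / 2 < l j)
    (a b : Fin n → ℝ) (ha : ∀ j, 0 < a j) (hb : ∀ j, 0 < b j) {s D : ℝ} (hs : 0 < s) (k : Fin n)
    (hD : ∫ u, |windowDensity (l k) (a k) (b k) s u - windowDensity (l k) (b k) (a k) s u| ≤ D) :
    ∫ z : Fin n → ℝ, ∏ i,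
        (if i = k then |windowDensity (l i) (a i) (b i) s (z i) -
          windowDensity (l i) (b i) (a i) s (z i)|
        else windowDensity (l i) (a i) (b i) s (z i) + windowDensity (l i) (b i) (a i) s (z i)) ≤
      2 ^ n * D := by
  have hD0 : 0 ≤ D := le_trans (integral_nonneg fun _ => abs_nonneg _) hD
  rw [integral_fintype_prod_volume_eq_prod (fun i u =>
    if i = k then |windowDensity (l i) (a i) (b i) s u - windowDensity (l i) (b i) (a i) s u|
    else windowDensity (l i) (a i) (b i) s u + windowDensity (l i) (b i) (a i) s u)]
  have hle : ∀ i : Fin n, ∫ u, (if i = k then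
      |windowDensity (l i) (a i) (b i) s u - windowDensity (l i) (b i) (a i) s u|
      else windowDensity (l i) (a i) (b i) s u + windowDensity (l i) (b i) (a i) s u) ≤
      2 * if i = k then D else 1 := by
    intro i
    split_ifs with h
    · subst h; linarith
    · rw [integral_add (integrable_windowDensity (hl i) _ _ _)
        (integrable_windowDensity (hl i) _ _ _)]
      linarith [integral_windowDensity_le_one (hl i) (ha i) (hb i) hs,
        integral_windowDensity_le_one (hl i) (hb i) (ha i) hs]
  have hnn : ∀ i : Fin n, 0 ≤ ∫ u, (if i = k then
      |windowDensity (l i) (a i) (b i) s u - windowDensity (l i) (b i) (a i) s u|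
      else windowDensity (l i) (a i) (b i) s u + windowDensity (l i) (b i) (a i) s u) := by
    intro i
    refine integral_nonneg fun u => ?_
    split_ifs
    · exact abs_nonneg _
    · exact add_nonneg (windowDensity_nonneg (hl i) (ha i) hs u)
        (windowDensity_nonneg (hl i) (hb i) hs u)
  refine (Finset.prod_le_prod (fun i _ => hnn i) fun i _ => hle i).trans_eq ?_
  rw [Finset.prod_mul_distrib, Finset.prod_ite_eq' Finset.univ k]
  simp

theorem integrable_prod_windowDensity {n : ℕ} (l : Fin n → ℝ) (hl : ∀ j, -1 / 2 < l j)
    (a b : Fin n → ℝ) (s : ℝ) (k : Fin n) :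
    Integrable fun z : Fin n → ℝ => ∏ i,
        (if i = k then |windowDensity (l i) (a i) (b i) s (z i) -
          windowDensity (l i) (b i) (a i) s (z i)|
        else windowDensity (l i) (a i) (b i) s (z i) + windowDensity (l i) (b i) (a i) s (z i)) := by
  refine Integrable.fintype_prod (f := fun i u =>
    if i = k then |windowDensity (l i) (a i) (b i) s u - windowDensity (l i) (b i) (a i) s u|
    else windowDensity (l i) (a i) (b i) s u + windowDensity (l i) (b i) (a i) s u) fun i => ?_
  have h1 := integrable_windowDensity (hl i) (a i) (b i) s
  have h2 := integrable_windowDensity (hl i) (b i) (a i) s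
  split_ifs
  · exact (h1.sub h2).abs
  · exact h1.add h2

theorem stmt18 {n : ℕ} (l : Fin n → ℝ) (hl : ∀ j, -1/2 < l j) :
    ∃ γ : ℝ, 0 < γ ∧ γ ≤ 1/2 ∧ (∀ k, γ < l k + 1/2) ∧
      ∃ C : ℝ, 0 < C ∧
        ∀ (x x' : EuclideanSpace ℝ (Fin n)) (t : ℝ),
          (∀ j, 0 < x j) → (∀ j, 0 < x' j) → 0 < t →
          (∫ z in Metric.ball (0 : EuclideanSpace ℝ (Fin n)) (Real.sqrt t),
              Set.indicator {z : EuclideanSpace ℝ (Fin n) |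
                  (∀ j, 0 < x j + z j) ∧ (∀ j, 0 < x' j + z j)}
                (fun z => |Real.sqrt (Xi l x z t) - Real.sqrt (Xi l x' z t)| ^ 2) z) ≤
            C * (‖x - x'‖ ^ 2 / t) ^ γ := by
  obtain ⟨γ, hγ0, hγ1, hγl⟩ := exists_exponent l hl
  refine ⟨γ, hγ0, hγ1, hγl, ?_⟩
  choose c hc hcont using fun j => integral_abs_sub_windowDensity_le (hl j)
  have hcs : 0 ≤ ∑ k, 2 ^ n * c k :=
    Finset.sum_nonneg fun k _ => mul_nonneg (by positivity) (hc k).le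
  refine ⟨(∑ k, 2 ^ n * c k) + 1, by positivity, ?_⟩
  intro x x' t hx hx' ht
  have hs : 0 < √t := Real.sqrt_pos.2 ht
  set s := √t with hsdef
  have hpow : (‖x - x'‖ / s) ^ (2 * γ) = (‖x - x'‖ ^ 2 / t) ^ γ := by
    rw [Real.rpow_mul (by positivity), Real.rpow_two, div_pow, hsdef, Real.sq_sqrt ht.le]
  set G : Fin n → (Fin n → ℝ) → ℝ := fun k z => ∏ i,
    (if i = k then |windowDensity (l i) (x i) (x' i) s (z i) -
      windowDensity (l i) (x' i) (x i) s (z i)|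
    else windowDensity (l i) (x i) (x' i) s (z i) + windowDensity (l i) (x' i) (x i) s (z i)) with hG
  have hGint : ∀ k, Integrable (G k) := fun k =>
    integrable_prod_windowDensity l hl (fun j => x j) (fun j => x' j) s k
  have hGle : ∀ k, ∫ z, G k z ≤ 2 ^ n * c k * (‖x - x'‖ ^ 2 / t) ^ γ := by
    intro k
    rw [mul_assoc]
    refine integral_prod_windowDensity_le l hl (fun j => x j) (fun j => x' j) hx hx' hs k ?_
    refine (hcont k (2 * γ) (by linarith) (by linarith) (by linarith [hγl k]) _ _ _ (hx k) (hx' k)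
      hs).trans ?_
    rw [← hpow]
    have := (hc k).le
    gcongr
    simpa using PiLp.norm_apply_le (x - x') k
  have hmp := PiLp.volume_preserving_ofLp (Fin n)
  have hsumint : Integrable fun z : EuclideanSpace ℝ (Fin n) => ∑ k, G k z :=
    hmp.integrable_comp_of_integrable (integrable_finsetSum _ fun k _ => hGint k)
  have hGnn : ∀ k z, 0 ≤ G k z := fun k z => Finset.prod_nonneg fun i _ => by
    split_ifs
    · exact abs_nonneg _
    · exact add_nonneg (windowDensity_nonneg (hl i) (hx i) hs _)
        (windowDensity_nonneg (hl i) (hx' i) hs _)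
  rw [← integral_indicator Metric.isOpen_ball.measurableSet]
  calc _ ≤ ∫ z : EuclideanSpace ℝ (Fin n), ∑ k, G k z := by
        refine integral_mono_of_nonneg (ae_of_all _ fun z => ?_) hsumint (ae_of_all _ fun z => ?_)
        · exact Set.indicator_nonneg
            (fun z _ => Set.indicator_nonneg (fun _ _ => by positivity) z) z
        · have hnn : 0 ≤ ∑ k, G k z := Finset.sum_nonneg fun k _ => hGnn k z
          refine Set.indicator_apply_le' (fun hz => ?_) fun _ => hnn
          refine Set.indicator_apply_le' (fun hpos => ?_) fun _ => hnn
          have hwin : ∀ j, z j ∈ commonWindow (x j) (x' j) s := fun j => by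
            refine ⟨?_, hpos.1 j, hpos.2 j⟩
            have h1 := PiLp.norm_apply_le z j
            rw [Real.norm_eq_abs] at h1
            exact h1.trans_lt (mem_ball_zero_iff.1 hz)
          have e1 : Xi l x z t = ∏ j, windowDensity (l j) (x j) (x' j) s (z j) :=
            Finset.prod_congr rfl fun j _ => by
              rw [windowDensity, Set.indicator_of_mem (hwin j)]
          have e2 : Xi l x' z t = ∏ j, windowDensity (l j) (x' j) (x j) s (z j) :=
            Finset.prod_congr rfl fun j _ => by
              rw [windowDensity, commonWindow_comm, Set.indicator_of_mem (hwin j)]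
          have n1 : ∀ j, 0 ≤ windowDensity (l j) (x j) (x' j) s (z j) := fun j =>
            windowDensity_nonneg (hl j) (hx j) hs _
          have n2 : ∀ j, 0 ≤ windowDensity (l j) (x' j) (x j) s (z j) := fun j =>
            windowDensity_nonneg (hl j) (hx' j) hs _
          simp only [e1, e2]
          exact (abs_sqrt_sub_sqrt_sq_le (Finset.prod_nonneg fun j _ => n1 j)
            (Finset.prod_nonneg fun j _ => n2 j)).trans
            (abs_prod_sub_prod_le Finset.univ _ _ n1 n2)
    _ = ∫ z : Fin n → ℝ, ∑ k, G k z :=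
        hmp.integral_comp (MeasurableEquiv.toLp 2 (Fin n → ℝ)).symm.measurableEmbedding fun z => ∑ k, G k z
    _ = ∑ k, ∫ z, G k z := integral_finsetSum _ fun k _ => hGint k
    _ ≤ ∑ k, 2 ^ n * c k * (‖x - x'‖ ^ 2 / t) ^ γ := Finset.sum_le_sum fun k _ => hGle k
    _ = (∑ k, 2 ^ n * c k) * (‖x - x'‖ ^ 2 / t) ^ γ := (Finset.sum_mul _ _ _).symm
    _ ≤ ((∑ k, 2 ^ n * c k) + 1) * (‖x - x'‖ ^ 2 / t) ^ γ := by
        gcongr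
        linarith
end
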